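/- arXiv:1608.04666 — 2 statements merged into one kernel-verified Lean document; each statement's English description precedes it below -/
import Mathlib

section
/- Let F be a field, n ≥ 3, and let A₁ be an invertible (n−2)×(n−2) matrix over F. Then the n×n block diagonal matrix Dg[J_2(0), A₁] is a product of two nilpotent n×n matrices over F. -/
/-- The `2 × 2` nilpotent Jordan block `J_2(0)`, with a one in entry `(2,1)`. -/
def jordanBlock0 (F : Type*) [Field F] (k : ℕ) : Matrix (Fin k) (Fin k) F :=
  Matrix.of fun i j => if (i : ℕ) = (j : ℕ) + 1 then 1 else 0

open Matrix

/-- A matrix whose nonzero entries strictly increase a grading of the index set is nilpotent. -/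
lemma Matrix.isNilpotent_of_grading {n R : Type*} [Fintype n] [DecidableEq n] [CommRing R]
    (M : Matrix n n R) (f : n → ℕ) (h : ∀ i j, f j ≤ f i → M i j = 0) : IsNilpotent M := by
  have key : ∀ m : ℕ, ∀ i j, f j < f i + m → (M ^ m) i j = 0 := by
    intro m
    induction m with
    | zero =>
      intro i j hij
      rw [pow_zero, Matrix.one_apply_ne]
      rintro rfl
      omega
    | succ m ih =>
      intro i j hij
      rw [pow_succ, Matrix.mul_apply]
      refine Finset.sum_eq_zero fun l _ => ?_
      by_cases hl : f l < f i + m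
      · rw [ih i l hl, zero_mul]
      · rw [h l j (by omega), mul_zero]
  refine ⟨Finset.univ.sup f + 1, ?_⟩
  ext i j
  have := Finset.le_sup (f := f) (Finset.mem_univ j)
  exact key _ i j (by omega)

lemma isNilpotent_conj {R : Type*} [Ring R] {x s t : R} (hx : IsNilpotent x) (hts : t * s = 1) :
    IsNilpotent (s * x * t) := by
  obtain ⟨m, hm⟩ := hx
  have key : ∀ l : ℕ, (s * x * t) ^ (l + 1) = s * x ^ (l + 1) * t := by
    intro l
    induction l with
    | zero => simp
    | succ l ih =>
      rw [pow_succ, ih, pow_succ x (l + 1)]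
      calc s * x ^ (l + 1) * t * (s * x * t) = s * x ^ (l + 1) * (t * s) * x * t := by noncomm_ring
        _ = _ := by rw [hts]; noncomm_ring
  exact ⟨m + 1, by rw [key, pow_succ, hm]; simp⟩

/-- An invertible matrix is similar to one whose top left entry is nonzero. -/
lemma exists_conj_apply_zero_ne_zero {F : Type*} [Field F] {k : ℕ}
    (A : Matrix (Fin (k + 1)) (Fin (k + 1)) F) (hA : IsUnit A) :
    ∃ P P' : Matrix (Fin (k + 1)) (Fin (k + 1)) F,
      P * P' = 1 ∧ P' * P = 1 ∧ (P * A * P') 0 0 ≠ 0 := by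
  by_cases h0 : A 0 0 = 0
  · obtain ⟨i, hi⟩ : ∃ i, A i 0 ≠ 0 := by
      by_contra! hcon
      rw [Matrix.isUnit_iff_isUnit_det, Matrix.det_eq_zero_of_column_eq_zero 0 hcon] at hA
      simp at hA
    have hi0 : (0 : Fin (k + 1)) ≠ i := by
      rintro rfl
      exact hi h0
    refine ⟨transvection 0 i 1, transvection 0 i (-1), ?_, ?_, ?_⟩
    · rw [transvection_mul_transvection_same _ _ hi0]; simp
    · rw [transvection_mul_transvection_same _ _ hi0]; simp
    · rw [mul_transvection_apply_of_ne _ _ _ _ hi0, transvection_mul_apply_same]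
      simpa [h0] using hi
  · exact ⟨1, 1, by simp, by simp, by simpa using h0⟩

/-- An invertible matrix is similar to a product of a lower triangular matrix and a unipotent
upper triangular matrix. -/
lemma exists_conj_eq_lower_mul_upper {F : Type*} [Field F] (k : ℕ)
    (A : Matrix (Fin k) (Fin k) F) (hA : IsUnit A) :
    ∃ Q Q' L U : Matrix (Fin k) (Fin k) F,
      Q * Q' = 1 ∧ Q' * Q = 1 ∧ Q * A * Q' = L * U ∧
      (∀ i j, i < j → L i j = 0) ∧ (∀ i, L i i ≠ 0) ∧
      (∀ i j, j < i → U i j = 0) ∧ (∀ i, U i i = 1) := by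
  induction k with
  | zero =>
    exact ⟨1, 1, 1, 1, by simp, by simp, Subsingleton.elim _ _, fun i => i.elim0,
      fun i => i.elim0, fun i => i.elim0, fun i => i.elim0⟩
  | succ k ih =>
    obtain ⟨P, P', hPP', hP'P, ha⟩ := exists_conj_apply_zero_ne_zero A hA
    let e : Fin 1 ⊕ Fin k ≃ Fin (k + 1) := finSumFinEquiv.trans (finCongr (add_comm 1 k))
    have he0 : e.symm 0 = Sum.inl 0 := by
      rw [Equiv.symm_apply_eq]; ext; simp [e]
    have hes : ∀ i : Fin k, e.symm i.succ = Sum.inr i := by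
      intro i
      rw [Equiv.symm_apply_eq]; ext; simp [e]
    set A' := P * A * P' with hA'
    have hA'u : IsUnit A' :=
      ((IsUnit.of_mul_eq_one _ hPP').mul hA).mul (IsUnit.of_mul_eq_one _ hP'P)
    set a := A' 0 0 with ha_def
    let B : Matrix (Fin 1) (Fin k) F := (A'.submatrix e e).toBlocks₁₂
    let C : Matrix (Fin k) (Fin 1) F := (A'.submatrix e e).toBlocks₂₁
    let D : Matrix (Fin k) (Fin k) F := (A'.submatrix e e).toBlocks₂₂
    have hblocks : A'.submatrix e e = fromBlocks (a • 1) B C D := by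
      rw [← fromBlocks_toBlocks (A'.submatrix e e)]
      congr 1
      ext i j
      have he : e (Sum.inl 0) = 0 := by rw [← he0, Equiv.apply_symm_apply]
      simp [Subsingleton.elim i 0, Subsingleton.elim j 0, toBlocks₁₁, he, ha_def]
    let _ : Invertible (a • (1 : Matrix (Fin 1) (Fin 1) F)) :=
      ⟨a⁻¹ • 1, by simp [smul_smul, ha], by simp [smul_smul, ha]⟩
    have hD : IsUnit (D - C * ⅟(a • (1 : Matrix (Fin 1) (Fin 1) F)) * B) := by
      rw [← isUnit_fromBlocks_iff_of_invertible₁₁, ← hblocks]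
      exact (isUnit_submatrix_equiv e e).2 hA'u
    have hinv : ⅟(a • (1 : Matrix (Fin 1) (Fin 1) F)) = a⁻¹ • 1 := rfl
    rw [hinv] at hD
    obtain ⟨Q, Q', L, U, hQQ', hQ'Q, hLU, hL, hLd, hU, hUd⟩ := ih _ hD
    let R : Matrix (Fin 1 ⊕ Fin k) (Fin 1 ⊕ Fin k) F := fromBlocks 1 0 0 Q
    let R' : Matrix (Fin 1 ⊕ Fin k) (Fin 1 ⊕ Fin k) F := fromBlocks 1 0 0 Q'
    have hRR' : R * R' = 1 := by simp [R, R', fromBlocks_multiply, hQQ']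
    have hR'R : R' * R = 1 := by simp [R, R', fromBlocks_multiply, hQ'Q]
    let L' : Matrix (Fin 1 ⊕ Fin k) (Fin 1 ⊕ Fin k) F := fromBlocks (a • 1) 0 (Q * C) L
    let U' : Matrix (Fin 1 ⊕ Fin k) (Fin 1 ⊕ Fin k) F := fromBlocks 1 (a⁻¹ • (B * Q')) 0 U
    have hmain : R * A'.submatrix e e * R' = L' * U' := by
      rw [hblocks]
      simp only [R, R', L', U', fromBlocks_multiply]
      congr 1
      · simp
      · simp [smul_smul, ha]
      · simp
      · rw [← hLU]
        simp [Matrix.mul_sub, Matrix.sub_mul, Matrix.mul_assoc]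
    have hsub : ∀ M N : Matrix (Fin 1 ⊕ Fin k) (Fin 1 ⊕ Fin k) F,
        M.submatrix e.symm e.symm * N.submatrix e.symm e.symm = (M * N).submatrix e.symm e.symm :=
      fun M N => submatrix_mul_equiv M N _ _ _
    have hA'' : A' = (A'.submatrix e e).submatrix e.symm e.symm := by simp
    refine ⟨R.submatrix e.symm e.symm * P, P' * R'.submatrix e.symm e.symm,
      L'.submatrix e.symm e.symm, U'.submatrix e.symm e.symm, ?_, ?_, ?_, ?_, ?_, ?_, ?_⟩
    · rw [Matrix.mul_assoc, ← Matrix.mul_assoc P, hPP', Matrix.one_mul, hsub, hRR',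
        submatrix_one_equiv]
    · rw [Matrix.mul_assoc, ← Matrix.mul_assoc (R'.submatrix _ _), hsub, hR'R,
        submatrix_one_equiv, Matrix.one_mul, hP'P]
    · rw [hsub, ← hmain, ← hsub, ← hsub, ← hA'', hA']
      simp only [Matrix.mul_assoc]
    · intro i j hij
      cases i using Fin.cases <;> cases j using Fin.cases
      · simp at hij
      · simp [L', he0, hes]
      · simp at hij
      · simpa [L', hes] using hL _ _ (by simpa using hij)
    · intro i
      cases i using Fin.cases
      · simpa [L', he0] using ha
      · simpa [L', hes] using hLd _
    · intro i j hij
      cases i using Fin.cases <;> cases j using Fin.cases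
      · simp at hij
      · simp at hij
      · simp [U', he0, hes]
      · simpa [U', hes] using hU _ _ (by simpa using hij)
    · intro i
      cases i using Fin.cases
      · simp [U', he0]
      · simpa [U', hes] using hUd _

namespace NilpotentFactor

variable (F : Type*) [Field F] (m : ℕ)

/-- The lower left block of the strictly lower triangular factor. -/
def lowerBlock : Matrix (Fin (m + 1)) (Fin 2) F :=
  single 0 0 1 + single 0 1 1 -
    jordanBlock0 F (m + 1) * single (0 : Fin (m + 1)) (0 : Fin 2) (1 : F)

/-- The upper right block of the strictly upper triangular factor. -/
def upperBlock : Matrix (Fin 2) (Fin (m + 1)) F :=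
  single 0 0 1 + single 1 0 1 +
    single (1 : Fin 2) (0 : Fin (m + 1)) (1 : F) * (jordanBlock0 F (m + 1))ᵀ

/-- The strictly lower triangular factor. -/
def lowerFactor : Matrix (Fin 2 ⊕ Fin (m + 1)) (Fin 2 ⊕ Fin (m + 1)) F :=
  fromBlocks (-jordanBlock0 F 2) 0 (lowerBlock F m) (jordanBlock0 F (m + 1))

/-- The factor that is strictly upper triangular once the first two indices are swapped. -/
def upperFactor : Matrix (Fin 2 ⊕ Fin (m + 1)) (Fin 2 ⊕ Fin (m + 1)) F :=
  fromBlocks (jordanBlock0 F 2) (upperBlock F m) 0 (jordanBlock0 F (m + 1))ᵀ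

/-- The shear adding `c` times the third coordinate to the second one. -/
def rowShear (c : F) : Matrix (Fin 2 ⊕ Fin (m + 1)) (Fin 2 ⊕ Fin (m + 1)) F :=
  fromBlocks 1 (single 1 0 c) 0 1

/-- The shear adding `c` times the first coordinate to the third one. -/
def colShear (c : F) : Matrix (Fin 2 ⊕ Fin (m + 1)) (Fin 2 ⊕ Fin (m + 1)) F :=
  fromBlocks 1 0 (single 0 0 c) 1

variable {F}

lemma jordanBlock0_two : jordanBlock0 F 2 = single 1 0 1 := by
  ext i j
  fin_cases i <;> fin_cases j <;> simp [jordanBlock0]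

variable {m}

lemma rowShear_mul_rowShear {c d : F} (h : c + d = 0) : rowShear F m c * rowShear F m d = 1 := by
  have h' : d + c = 0 := by rw [add_comm, h]
  simp [rowShear, fromBlocks_multiply, ← single_add, h']

lemma colShear_mul_colShear {c d : F} (h : c + d = 0) : colShear F m c * colShear F m d = 1 := by
  simp [colShear, fromBlocks_multiply, ← single_add, h]

variable (F m)

lemma jordanBlock0_mul_transpose :
    jordanBlock0 F (m + 1) * (jordanBlock0 F (m + 1))ᵀ = 1 - single 0 0 1 := by
  ext i j
  rw [mul_apply]
  cases i using Fin.cases with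
  | zero => cases j using Fin.cases <;> simp [jordanBlock0, one_apply, single_apply]
  | succ i =>
    rw [Finset.sum_eq_single i.castSucc]
    · by_cases hj : j = i.succ
      · subst hj; simp [jordanBlock0, (Fin.succ_ne_zero i).symm]
      · have : (j : ℕ) ≠ i + 1 := fun h => hj (Fin.ext h)
        simp [jordanBlock0, (Fin.succ_ne_zero i).symm, this, one_apply_ne' hj]
    · intro b _ hb
      have : (i : ℕ) ≠ b := fun h => hb (Fin.ext h.symm)
      simp [jordanBlock0, this]
    · simp

lemma lowerFactor_mul_shears_mul_upperFactor :
    lowerFactor F m * (rowShear F m (-1) * colShear F m 1) * upperFactor F m =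
      rowShear F m (-1) * fromBlocks (jordanBlock0 F 2) 0 0 1 * colShear F m 1 := by
  have h1 : lowerBlock F m * (1 - single (1 : Fin 2) (0 : Fin 2) (1 : F)) +
      jordanBlock0 F (m + 1) * single (0 : Fin (m + 1)) (0 : Fin 2) (1 : F) = single 0 1 1 := by
    simp only [lowerBlock, Matrix.mul_sub, Matrix.add_mul, Matrix.sub_mul, Matrix.mul_assoc]
    simp
    abel
  have h2 : lowerBlock F m * single (1 : Fin 2) (0 : Fin (m + 1)) (1 : F) = single 0 0 1 := by
    simp [lowerBlock, Matrix.add_mul, Matrix.sub_mul, Matrix.mul_assoc]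
  have h3 : single (1 : Fin 2) (0 : Fin 2) (1 : F) * upperBlock F m = single 1 0 1 := by
    simp [upperBlock, Matrix.mul_add, ← Matrix.mul_assoc]
  have h4 : single (0 : Fin (m + 1)) (1 : Fin 2) (1 : F) * upperBlock F m =
      single 0 0 1 + single 0 0 1 * (jordanBlock0 F (m + 1))ᵀ := by
    simp [upperBlock, Matrix.mul_add, ← Matrix.mul_assoc]
  have hneg : single (1 : Fin 2) (0 : Fin (m + 1)) (-1 : F) = -single 1 0 1 := by
    ext i j
    rw [neg_apply, single_apply, single_apply]
    split_ifs <;> simp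
  have hshears : rowShear F m (-1) * colShear F m 1 =
      fromBlocks (1 - single 1 0 1) (-single 1 0 1) (single 0 0 1) 1 := by
    simp [rowShear, colShear, fromBlocks_multiply, hneg, sub_eq_add_neg]
  have hleft : lowerFactor F m * (rowShear F m (-1) * colShear F m 1) =
      fromBlocks (-single 1 0 1) 0 (single 0 1 1)
        (jordanBlock0 F (m + 1) - single 0 0 1) := by
    rw [hshears, lowerFactor, fromBlocks_multiply, h1, jordanBlock0_two,
      Matrix.mul_neg (lowerBlock F m), h2]
    simp [Matrix.mul_add, sub_eq_add_neg, add_comm]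
  have hright : rowShear F m (-1) * fromBlocks (jordanBlock0 F 2) 0 0 1 * colShear F m 1 =
      fromBlocks 0 (-single 1 0 1) (single 0 0 1) 1 := by
    simp [rowShear, colShear, fromBlocks_multiply, hneg, jordanBlock0_two]
  rw [hleft, hright, upperFactor, fromBlocks_multiply, jordanBlock0_two,
    Matrix.neg_mul _ (upperBlock F m), h3, h4, Matrix.sub_mul _ _ (jordanBlock0 F (m + 1))ᵀ,
    jordanBlock0_mul_transpose]
  simp

variable {F m}

lemma isNilpotent_mul_lowerFactor (a : F) (L : Matrix (Fin (m + 1)) (Fin (m + 1)) F)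
    (hL : ∀ i j, i < j → L i j = 0) :
    IsNilpotent (fromBlocks (diagonal ![1, a]) 0 0 L * lowerFactor F m) := by
  rw [← isNilpotent_transpose_iff]
  refine isNilpotent_of_grading _ (Sum.elim (fun i => (i : ℕ)) fun i => (i : ℕ) + 2) ?_
  rw [lowerFactor, fromBlocks_multiply]
  rintro (i | i) (j | j) hij
  · fin_cases i <;> fin_cases j <;> simp_all [jordanBlock0]
  · simp only [Sum.elim_inl, Sum.elim_inr] at hij
    omega
  · simp
  · simp only [Sum.elim_inr] at hij
    simp only [transpose_apply, fromBlocks_apply₂₂, Matrix.zero_mul, zero_add, mul_apply]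
    refine Finset.sum_eq_zero fun l _ => ?_
    by_cases hl : (l : ℕ) = i + 1
    · rw [hL j l (by rw [Fin.lt_def]; omega), zero_mul]
    · simp [jordanBlock0, hl]

lemma isNilpotent_upperFactor_mul (U : Matrix (Fin (m + 1)) (Fin (m + 1)) F)
    (hU : ∀ i j, j < i → U i j = 0) :
    IsNilpotent (upperFactor F m * fromBlocks 1 0 0 U) := by
  refine isNilpotent_of_grading _ (Sum.elim (fun i => 1 - (i : ℕ)) fun i => (i : ℕ) + 2) ?_
  rw [upperFactor, fromBlocks_multiply]
  rintro (i | i) (j | j) hij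
  · fin_cases i <;> fin_cases j <;> simp_all [jordanBlock0]
  · simp only [Sum.elim_inl, Sum.elim_inr] at hij
    omega
  · simp
  · simp only [Sum.elim_inr] at hij
    simp only [fromBlocks_apply₂₂, Matrix.zero_mul, zero_add, mul_apply]
    refine Finset.sum_eq_zero fun l _ => ?_
    by_cases hl : (l : ℕ) = i + 1
    · rw [hU l j (by rw [Fin.lt_def]; omega), mul_zero]
    · simp [jordanBlock0, hl]

lemma commute_rowShear (c : F) (L : Matrix (Fin (m + 1)) (Fin (m + 1)) F)
    (hL : ∀ i j, i < j → L i j = 0) :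
    Commute (fromBlocks (diagonal ![1, L 0 0]) 0 0 L) (rowShear F m c) := by
  have h : diagonal ![1, L 0 0] * single (1 : Fin 2) (0 : Fin (m + 1)) c =
      single (1 : Fin 2) (0 : Fin (m + 1)) c * L := by
    ext i j
    cases j using Fin.cases with
    | zero => fin_cases i <;> simp [mul_comm]
    | succ j => fin_cases i <;> simp [hL 0 j.succ (Fin.succ_pos j)]
  simp [Commute, SemiconjBy, rowShear, fromBlocks_multiply, h]

lemma commute_colShear (c : F) (U : Matrix (Fin (m + 1)) (Fin (m + 1)) F)
    (hU : ∀ i j, j < i → U i j = 0) (hU0 : U 0 0 = 1) :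
    Commute (fromBlocks 1 0 0 U) (colShear F m c) := by
  have h : U * single (0 : Fin (m + 1)) (0 : Fin 2) c = single 0 0 c := by
    ext i j
    cases i using Fin.cases with
    | zero => fin_cases j <;> simp [hU0]
    | succ i => fin_cases j <;> simp [hU i.succ 0 (Fin.succ_pos i), (Fin.succ_ne_zero i).symm]
  simp [Commute, SemiconjBy, colShear, fromBlocks_multiply, h]

/-- The case in which the invertible block is given by an LU factorization. -/
lemma exists_nilpotent_factors (L U : Matrix (Fin (m + 1)) (Fin (m + 1)) F)
    (hL : ∀ i j, i < j → L i j = 0) (hU : ∀ i j, j < i → U i j = 0) (hU0 : U 0 0 = 1) :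
    ∃ N₁ N₂ : Matrix (Fin 2 ⊕ Fin (m + 1)) (Fin 2 ⊕ Fin (m + 1)) F,
      IsNilpotent N₁ ∧ IsNilpotent N₂ ∧
      fromBlocks (L 0 0 • jordanBlock0 F 2) 0 0 (L * U) = N₁ * N₂ := by
  set G := fromBlocks (diagonal ![1, L 0 0]) 0 0 L with hG
  set H : Matrix (Fin 2 ⊕ Fin (m + 1)) (Fin 2 ⊕ Fin (m + 1)) F := fromBlocks 1 0 0 U with hH
  have hrow : rowShear F m 1 * rowShear F m (-1) = 1 := rowShear_mul_rowShear (by simp)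
  have hcol : colShear F m 1 * colShear F m (-1) = 1 := colShear_mul_colShear (by simp)
  refine ⟨rowShear F m 1 * (G * lowerFactor F m) * rowShear F m (-1),
    colShear F m 1 * (upperFactor F m * H) * colShear F m (-1),
    isNilpotent_conj (isNilpotent_mul_lowerFactor _ L hL) (rowShear_mul_rowShear (by simp)),
    isNilpotent_conj (isNilpotent_upperFactor_mul U hU) (colShear_mul_colShear (by simp)), ?_⟩
  have hprod : fromBlocks (L 0 0 • jordanBlock0 F 2) 0 0 (L * U) =
      G * fromBlocks (jordanBlock0 F 2) 0 0 1 * H := by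
    simp only [hG, hH, fromBlocks_multiply]
    congr 1
    · ext i j
      fin_cases i <;> fin_cases j <;> simp [jordanBlock0]
    all_goals simp
  calc _ = G * fromBlocks (jordanBlock0 F 2) 0 0 1 * H := hprod
    _ = G * (rowShear F m 1 * rowShear F m (-1)) * fromBlocks (jordanBlock0 F 2) 0 0 1 *
          (colShear F m 1 * colShear F m (-1)) * H := by rw [hrow, hcol]; simp
    _ = (G * rowShear F m 1) * (rowShear F m (-1) * fromBlocks (jordanBlock0 F 2) 0 0 1 *
          colShear F m 1) * (colShear F m (-1) * H) := by simp only [Matrix.mul_assoc]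
    _ = (rowShear F m 1 * G) * (lowerFactor F m * (rowShear F m (-1) * colShear F m 1) *
          upperFactor F m) * (H * colShear F m (-1)) := by
        rw [(commute_rowShear 1 L hL).eq, ← (commute_colShear (-1) U hU hU0).eq,
          lowerFactor_mul_shears_mul_upperFactor]
    _ = _ := by simp only [Matrix.mul_assoc]

end NilpotentFactor

open NilpotentFactor

/-- For `n ≥ 3` (here `n = 2 + k` with `k ≥ 1`) and `A₁` an invertible
`(n-2) × (n-2)` matrix, the block diagonal matrix `Dg[J_2(0), A₁]` is a product of two
nilpotent `n × n` matrices. -/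
theorem j2_invertible_block_product_of_nilpotents
    (F : Type*) [Field F] (k : ℕ) (hk : 0 < k)
    (A₁ : Matrix (Fin k) (Fin k) F) (hA₁ : IsUnit A₁) :
    ∃ N₁ N₂ : Matrix (Fin (2 + k)) (Fin (2 + k)) F,
      IsNilpotent N₁ ∧ IsNilpotent N₂ ∧
      Matrix.reindex finSumFinEquiv finSumFinEquiv
          (Matrix.fromBlocks (jordanBlock0 F 2) 0 0 A₁) = N₁ * N₂ := by
  obtain ⟨m, rfl⟩ : ∃ m, k = m + 1 := ⟨k - 1, by omega⟩
  obtain ⟨Q, Q', L, U, hQQ', hQ'Q, hLU, hL, hLd, hU, hUd⟩ :=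
    exists_conj_eq_lower_mul_upper (m + 1) A₁ hA₁
  obtain ⟨N₁, N₂, hN₁, hN₂, hN⟩ := exists_nilpotent_factors L U hL hU (hUd 0)
  have ha := hLd 0
  set a := L 0 0
  let C : Matrix (Fin 2 ⊕ Fin (m + 1)) (Fin 2 ⊕ Fin (m + 1)) F :=
    fromBlocks (diagonal ![1, a]) 0 0 Q
  let C' : Matrix (Fin 2 ⊕ Fin (m + 1)) (Fin 2 ⊕ Fin (m + 1)) F :=
    fromBlocks (diagonal ![1, a⁻¹]) 0 0 Q'
  have hdiag : diagonal ![1, a] * diagonal ![1, a⁻¹] = 1 := by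
    ext i j
    fin_cases i <;> fin_cases j <;> simp [ha]
  have hCC' : C * C' = 1 := by simp [C, C', fromBlocks_multiply, hQQ', hdiag]
  have hconj : fromBlocks (jordanBlock0 F 2) 0 0 A₁ = C' * (N₁ * N₂) * C := by
    rw [← hN, ← hLU]
    simp only [C, C', fromBlocks_multiply]
    congr 1
    · ext i j
      fin_cases i <;> fin_cases j <;> simp [jordanBlock0, ha]
    · simp
    · simp
    · simp only [Matrix.zero_mul, zero_add, Matrix.mul_assoc, hQ'Q, Matrix.mul_one]
      simp [← Matrix.mul_assoc, hQ'Q]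
  let φ := reindexAlgEquiv F F (finSumFinEquiv (m := 2) (n := m + 1))
  refine ⟨φ (C' * N₁ * C), φ (C' * N₂ * C), (isNilpotent_conj hN₁ hCC').map φ,
    (isNilpotent_conj hN₂ hCC').map φ, ?_⟩
  rw [← map_mul]
  change φ _ = φ _
  congr 1
  calc _ = C' * (N₁ * N₂) * C := hconj
    _ = C' * N₁ * (C * C') * N₂ * C := by rw [hCC']; simp only [Matrix.mul_assoc, Matrix.one_mul]
    _ = _ := by simp only [Matrix.mul_assoc]
end

section
/- Let F be a field, let A₀ be a nilpotent m×m matrix over F with m ≥ 3, and let A₁ be an invertible k×k matrix over F. Then the (m+k)×(m+k) block diagonal matrix Dg[A₀, A₁] is a product of two nilpotent (m+k)×(m+k) matrices over F. -/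
open Module

/-- A factorization of `f` as a product of two nilpotent endomorphisms `N₁ * N₂` such that some
vector of `ker N₁` is not annihilated by some functional vanishing on `range N₂`. -/
def HasTransverseNilpotentFactorization {F V : Type*} [Field F] [AddCommGroup V] [Module F V]
    (f : End F V) : Prop :=
  ∃ (N₁ N₂ : End F V) (κ : V) (ψ : Dual F V), IsNilpotent N₁ ∧ IsNilpotent N₂ ∧
    (∀ v, f v = N₁ (N₂ v)) ∧ N₁ κ = 0 ∧ (∀ v, ψ (N₂ v) = 0) ∧ ψ κ = 1

/-- Two nonzero vectors admit a functional that vanishes at neither of them. -/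
lemma exists_dual_ne_zero_and_ne_zero {F V : Type*} [Field F] [AddCommGroup V] [Module F V]
    {x y : V} (hx : x ≠ 0) (hy : y ≠ 0) : ∃ φ : Dual F V, φ x ≠ 0 ∧ φ y ≠ 0 := by
  obtain ⟨α, hα⟩ : ∃ α : Dual F V, α x ≠ 0 := by
    by_contra! h
    exact hx ((forall_dual_apply_eq_zero_iff F x).1 h)
  obtain ⟨β, hβ⟩ : ∃ β : Dual F V, β y ≠ 0 := by
    by_contra! h
    exact hy ((forall_dual_apply_eq_zero_iff F y).1 h)
  by_cases h1 : α y = 0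
  · by_cases h2 : β x = 0
    · exact ⟨α + β, by simpa [h2] using hα, by simpa [h1] using hβ⟩
    · exact ⟨β, h2, hβ⟩
  · exact ⟨α, hα, h1⟩

section Extension

variable {F B : Type*} [Field F] [AddCommGroup B] [Module F B]

/-- Bordering a factorization by one dimension: the pivot `lam` is arbitrary. -/
lemma HasTransverseNilpotentFactorization.border {f : End F B}
    (hf : HasTransverseNilpotentFactorization f) (s : Dual F B) (t : B) (lam : F)
    (g : End F (B × F))
    (hg : ∀ b c, g (b, c) = (f (b + c • t), s (f (b + c • t)) + lam * c)) :
    HasTransverseNilpotentFactorization g := by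
  obtain ⟨N₁, N₂, κ, ψ, ⟨k₁, hk₁⟩, ⟨k₂, hk₂⟩, hfN, hκ, hψ, hψκ⟩ := hf
  set Y : Dual F B := s ∘ₗ N₁ + ψ with hY
  set X : B := N₂ t + lam • κ with hX
  set M₁ : End F (B × F) := LinearMap.prod (N₁ ∘ₗ LinearMap.fst F B F)
    (Y ∘ₗ LinearMap.fst F B F) with hM₁
  set M₂ : End F (B × F) := LinearMap.prod
    (N₂ ∘ₗ LinearMap.fst F B F + (LinearMap.snd F B F).smulRight X) 0 with hM₂
  have h₁ : ∀ k p, (M₁ ^ (k + 1)) p = ((N₁ ^ (k + 1)) p.1, Y ((N₁ ^ k) p.1)) := by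
    intro k
    induction k with
    | zero => intro p; simp [hM₁]
    | succ k ih =>
      intro p
      rw [pow_succ', Module.End.mul_apply, ih]
      simp [hM₁, pow_succ' N₁]
  have h₂ : ∀ k p, (M₂ ^ (k + 1)) p = ((N₂ ^ k) (N₂ p.1 + p.2 • X), 0) := by
    intro k
    induction k with
    | zero => intro p; simp [hM₂]
    | succ k ih =>
      intro p
      rw [pow_succ', Module.End.mul_apply, ih]
      simp [hM₂, pow_succ' N₂]
  refine ⟨M₁, M₂, (0, 1), LinearMap.snd F B F, ⟨k₁ + 1, ?_⟩, ⟨k₂ + 1, ?_⟩, ?_, ?_, ?_, ?_⟩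
  · refine LinearMap.ext fun p => ?_
    rw [h₁]
    simp [pow_succ, hk₁]
  · ext p <;> simp [h₂, hk₂]
  · rintro ⟨b, c⟩
    rw [hg]
    simp only [hM₁, hM₂, hY, hX, hfN]
    ext
    · simp [hκ]
    · simp [hκ, hψ, hψκ]
      ring
  · simp [hM₁]
  · simp [hM₂]
  · simp

end Extension

/-- If `f = s ∘ f₀ ∘ t + E`, where `E` vanishes on the image of a section `σ` of `P` and takes
values in `ker P`, then a factorization of `f₀` extends to one of `f`. -/
lemma HasTransverseNilpotentFactorization.extend.{u, v} {F : Type u} [Field F] {V : Type v}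
    [AddCommGroup V] [Module F V] [FiniteDimensional F V] (k : ℕ) :
    ∀ {B : Type u} [AddCommGroup B] [Module F B] [FiniteDimensional F B] {f₀ : End F B},
    HasTransverseNilpotentFactorization f₀ → finrank F V = finrank F B + k →
    ∀ (f E : End F V) (P t : V →ₗ[F] B) (σ s : B →ₗ[F] V),
    (∀ b, P (σ b) = b) → (∀ b, t (σ b) = b) → (∀ b, P (s b) = b) →
    (∀ v, P (E v) = 0) → (∀ b, E (σ b) = 0) → (∀ v, f v = s (f₀ (t v)) + E v) →
    HasTransverseNilpotentFactorization f := by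
  induction k with
  | zero =>
    intro B _ _ _ f₀ hf₀ hdim f E P t σ s hPσ htσ hPs hPE hEσ hf
    have hσ : Function.Surjective σ :=
      (LinearMap.injective_iff_surjective_of_finrank_eq_finrank (by simpa using hdim.symm)).1
        (Function.LeftInverse.injective hPσ)
    have hσP : ∀ v, σ (P v) = v := fun v => by
      obtain ⟨b, rfl⟩ := hσ v
      rw [hPσ]
    obtain ⟨N₁, N₂, κ, ψ, ⟨k₁, hk₁⟩, ⟨k₂, hk₂⟩, hfN, hκ, hψ, hψκ⟩ := hf₀
    have hpow : ∀ (N : End F B) (k : ℕ) v, ((σ ∘ₗ N ∘ₗ P) ^ k) v = σ ((N ^ k) (P v)) := by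
      intro N k
      induction k with
      | zero => intro v; simp [hσP]
      | succ k ih =>
        intro v
        rw [pow_succ', Module.End.mul_apply, ih]
        simp [hPσ, pow_succ' N]
    refine ⟨σ ∘ₗ N₁ ∘ₗ P, σ ∘ₗ N₂ ∘ₗ P, σ κ, ψ ∘ₗ P, ⟨k₁, ?_⟩, ⟨k₂, ?_⟩, ?_, ?_, ?_, ?_⟩
    · ext v; simp [hpow, hk₁]
    · ext v; simp [hpow, hk₂]
    · intro v
      obtain ⟨b, rfl⟩ := hσ v
      rw [hf, hEσ, htσ, ← hσP (s _), hPs]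
      simp [hPσ, hfN]
    · simp [hPσ, hκ]
    · simp [hPσ, hψ]
    · simp [hPσ, hψκ]
  | succ k ih =>
    intro B _ _ _ f₀ hf₀ hdim f E P t σ s hPσ htσ hPs hPE hEσ hf
    obtain ⟨w, z, φ, y, lam, hPw, hPz, hφσ, hyσ, hφw, hφz, hyw, hφE, hEw⟩ :
        ∃ (w z : V) (φ y : Dual F V) (lam : F), P w = 0 ∧ P z = 0 ∧ (∀ b, φ (σ b) = 0) ∧
          (∀ b, y (σ b) = 0) ∧ φ w = 1 ∧ φ z = 1 ∧ y w = 1 ∧ (∀ v, φ (E v) = lam * y v) ∧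
          E w = lam • z := by
      by_cases hE : ∃ v, E v ≠ 0
      · obtain ⟨v₀, hv₀⟩ := hE
        set v := v₀ - σ (P v₀) with hv
        have hPv : P v = 0 := by simp [hv, hPσ]
        have hEv : E v ≠ 0 := by simpa [hv, hEσ] using hv₀
        have hv0 : v ≠ 0 := fun h => hEv (by simp [h])
        obtain ⟨α, hαv, hαE⟩ := exists_dual_ne_zero_and_ne_zero (F := F) hv0 hEv
        refine ⟨(α v)⁻¹ • v, (α (E v))⁻¹ • E v, α - α ∘ₗ σ ∘ₗ P,
          ((α v)⁻¹ * α (E v))⁻¹ • (α ∘ₗ E), (α v)⁻¹ * α (E v), ?_, ?_, ?_, ?_, ?_, ?_, ?_, ?_, ?_⟩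
        · simp [hPv]
        · simp [hPE]
        · simp [hPσ]
        · simp [hEσ]
        · simp [hPv, hαv]
        · simp [hPE, hαE]
        · simp; field_simp
        · intro u; simp [hPE]; field_simp
        · simp [smul_smul, hαE]
      · push Not at hE
        obtain ⟨w, hw, hw0⟩ : ∃ w ∈ LinearMap.ker P, w ≠ 0 := by
          apply Submodule.exists_mem_ne_zero_of_ne_bot
          apply LinearMap.ker_ne_bot_of_finrank_lt
          omega
        rw [LinearMap.mem_ker] at hw
        obtain ⟨α, hα, -⟩ := exists_dual_ne_zero_and_ne_zero (F := F) hw0 hw0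
        refine ⟨(α w)⁻¹ • w, (α w)⁻¹ • w, α - α ∘ₗ σ ∘ₗ P, α - α ∘ₗ σ ∘ₗ P, 0, ?_⟩
        simp [hw, hPσ, hα, hE]
    set f₁ : End F (B × F) := LinearMap.prod
      (f₀ ∘ₗ (LinearMap.fst F B F + (LinearMap.snd F B F).smulRight (t w)))
      (φ ∘ₗ s ∘ₗ f₀ ∘ₗ (LinearMap.fst F B F + (LinearMap.snd F B F).smulRight (t w))
        + lam • LinearMap.snd F B F) with hf₁
    have hgood : HasTransverseNilpotentFactorization f₁ :=
      hf₀.border (φ ∘ₗ s) (t w) lam f₁ (fun b c => by simp [hf₁])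
    refine ih (B := B × F) hgood (by simp; omega) f (E - lam • y.smulRight z) (P.prod φ)
      ((t - y.smulRight (t w)).prod y)
      (σ ∘ₗ LinearMap.fst F B F + (LinearMap.snd F B F).smulRight w)
      (s ∘ₗ LinearMap.fst F B F +
        (LinearMap.snd F B F - φ ∘ₗ s ∘ₗ LinearMap.fst F B F).smulRight z) ?_ ?_ ?_ ?_ ?_ ?_
    · rintro ⟨b, c⟩; simp [hPσ, hPw, hφσ, hφw]
    · rintro ⟨b, c⟩; simp [htσ, hyσ, hyw]
    · rintro ⟨b, c⟩; simp [hPs, hPz, hφz]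
    · intro v; simp [hPE, hPz, hφE, hφz]
    · rintro ⟨b, c⟩; simp [hEσ, hyσ, hEw, hyw, smul_comm c lam z]
    · intro v
      rw [hf]
      simp [hf₁, smul_smul]

/-- A factorization for the `3 × 3` matrix with rows `(0, a, 0)`, `(0, c, d)`, `(0, 0, 0)`. -/
lemma hasTransverseNilpotentFactorization_three {F : Type*} [Field F] (a c d : F)
    (f : End F (F × F × F)) (hf : ∀ x y z, f (x, y, z) = (a * y, c * y + d * z, 0)) :
    HasTransverseNilpotentFactorization f := by
  let p₁ : Dual F (F × F × F) := LinearMap.fst F F (F × F)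
  let p₂ : Dual F (F × F × F) := LinearMap.fst F F F ∘ₗ LinearMap.snd F F (F × F)
  let p₃ : Dual F (F × F × F) := LinearMap.snd F F F ∘ₗ LinearMap.snd F F (F × F)
  refine ⟨p₃.prod (p₁.prod 0), (c • p₂ + d • p₃).prod (LinearMap.prod 0 (a • p₂)),
    (0, 1, 0), p₂, ⟨3, ?_⟩, ⟨3, ?_⟩, ?_, ?_, ?_, ?_⟩
  · refine LinearMap.ext fun v => ?_
    simp [pow_succ, p₁, p₃]
  · refine LinearMap.ext fun v => ?_
    simp [pow_succ, p₂, p₃]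
  · rintro ⟨x, y, z⟩
    simp [hf, p₁, p₂, p₃]
  · simp [p₁, p₃]
  · simp [p₂]
  · simp [p₂]

section Singular

variable {F : Type*} [Field F] {V : Type*} [AddCommGroup V] [Module F V] [FiniteDimensional F V]

/-- An endomorphism with a kernel vector outside its range. -/
lemma hasTransverseNilpotentFactorization_of_ker_not_le_range {f : End F V}
    (h : ¬ LinearMap.ker f ≤ LinearMap.range f) : HasTransverseNilpotentFactorization f := by
  obtain ⟨e, he, her⟩ := SetLike.not_le_iff_exists.1 h
  rw [LinearMap.mem_ker] at he
  obtain ⟨ψ, hψe, hψ⟩ := Submodule.exists_le_ker_of_notMem her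
  have hψf : ∀ v, ψ (f v) = 0 := fun v => hψ (LinearMap.mem_range_self f v)
  have h0 : HasTransverseNilpotentFactorization (0 : End F F) :=
    ⟨0, 0, 1, LinearMap.id, by simp, by simp, by simp, by simp, by simp, by simp⟩
  have hpos : 0 < finrank F V := finrank_pos_iff_exists_ne_zero.2 ⟨e, fun h => hψe (by simp [h])⟩
  refine h0.extend (finrank F V - 1) (by simp; omega) f f ((ψ e)⁻¹ • ψ) ((ψ e)⁻¹ • ψ)
    (LinearMap.toSpanSingleton F V e) (LinearMap.toSpanSingleton F V e) ?_ ?_ ?_ ?_ ?_ ?_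
  all_goals intro v
  all_goals simp [hψe, hψf, he, mul_comm]

/-- Vectors and functionals exhibiting a `3 × 3` compression of `f` of the form treated in
`hasTransverseNilpotentFactorization_three`. -/
lemma exists_compression_of_ker_le_range {f : End F V} (hdim : 3 ≤ finrank F V)
    (hker : LinearMap.ker f ≠ ⊥) (h : LinearMap.ker f ≤ LinearMap.range f) :
    ∃ (e b₂ b₃ : V) (p₁ p₂ ψ : Dual F V), f e = 0 ∧ (∀ v, ψ (f v) = 0) ∧
      (p₁ e = 1 ∧ p₁ b₂ = 0 ∧ p₁ b₃ = 0) ∧ (p₂ e = 0 ∧ p₂ b₂ = 1 ∧ p₂ b₃ = 0) ∧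
      (ψ e = 0 ∧ ψ b₂ = 0 ∧ ψ b₃ = 1) ∧ p₁ (f b₂) ≠ 0 ∧ p₁ (f b₃) = 0 ∧ p₂ (f b₃) ≠ 0 := by
  have hrn := LinearMap.finrank_range_add_finrank_ker f
  have hle := Submodule.finrank_mono h
  obtain ⟨e, he, he0⟩ := Submodule.exists_mem_ne_zero_of_ne_bot hker
  have hrange : LinearMap.range f < ⊤ := by
    rw [lt_top_iff_ne_top]
    exact fun ht => hker (LinearMap.ker_eq_bot_iff_range_eq_top.2 ht)
  obtain ⟨ψ₀, hψ₀, hψr⟩ := Submodule.exists_le_ker_of_lt_top _ hrange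
  have hψf : ∀ v, ψ₀ (f v) = 0 := fun v => hψr (LinearMap.mem_range_self f v)
  have hψe : ψ₀ e = 0 := hψr (h he)
  rw [LinearMap.mem_ker] at he
  obtain ⟨u, hψu, hu⟩ : ∃ u, ψ₀ u = 0 ∧ f u ≠ 0 := by
    by_contra! hcon
    have h1 : LinearMap.ker ψ₀ ≤ LinearMap.ker f := fun v hv => hcon v hv
    have h2 := Submodule.finrank_mono h1
    have h3 := LinearMap.finrank_range_add_finrank_ker ψ₀
    have h4 := Submodule.finrank_mono (hψr)
    have h5 : finrank F (LinearMap.range ψ₀) ≤ 1 := by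
      simpa using Submodule.finrank_le (LinearMap.range ψ₀)
    omega
  obtain ⟨g, hψg, hg⟩ : ∃ g, ψ₀ g ≠ 0 ∧ f g ∉ Submodule.span F {f u} := by
    by_contra! hcon
    obtain ⟨g₀, hg₀⟩ : ∃ g, ψ₀ g ≠ 0 := by
      by_contra! h'
      exact hψ₀ (LinearMap.ext h')
    have h1 : LinearMap.range f ≤ Submodule.span F {f u} := by
      rintro _ ⟨v, rfl⟩
      by_cases hv : ψ₀ v = 0
      · have h2 := hcon (g₀ + v) (by simpa [hv] using hg₀)
        rw [map_add] at h2
        exact (Submodule.add_mem_iff_right _ (hcon g₀ hg₀)).1 h2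
      · exact hcon v hv
    have h2 := Submodule.finrank_mono h1
    rw [finrank_span_singleton hu] at h2
    omega
  obtain ⟨α, hαe, hαu⟩ := exists_dual_ne_zero_and_ne_zero (F := F) he0 hu
  set b := u - (α u * (α e)⁻¹) • e with hb
  have hfb : f b = f u := by simp [hb, he]
  have hαb : α b = 0 := by simp [hb, hαe]
  have hψb : ψ₀ b = 0 := by simp [hb, hψu, hψe]
  have hb0 : b ≠ 0 := fun h' => hu (by rw [← hfb, h', map_zero])
  set g' := g - (α (f g) * (α (f u))⁻¹) • b with hg'
  have hαg : α (f g') = 0 := by simp [hg', hfb, hαu]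
  have hψg' : ψ₀ g' ≠ 0 := by simpa [hg', hψb] using hψg
  have hfg : f g' ≠ 0 := by
    intro h'
    apply hg
    rw [hg', map_sub, map_smul, hfb, sub_eq_zero] at h'
    rw [h']
    exact Submodule.smul_mem _ _ (Submodule.mem_span_singleton_self _)
  obtain ⟨β, hβb, hβg⟩ := exists_dual_ne_zero_and_ne_zero (F := F) hb0 hfg
  set β' : Dual F V := β - (β e * (α e)⁻¹) • α with hβ'
  have hβe : β' e = 0 := by simp [hβ', hαe]
  have hβb' : β' b = β b := by simp [hβ', hαb]
  have hβg' : β' (f g') = β (f g') := by simp [hβ', hαg]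
  set g'' := (ψ₀ g')⁻¹ • g' with hg''
  have hψg'' : ψ₀ g'' = 1 := by simp [hg'', hψg']
  refine ⟨e, b, g'', (α e)⁻¹ • (α - α g'' • ψ₀), (β b)⁻¹ • (β' - β' g'' • ψ₀), ψ₀, he, hψf,
    ⟨?_, ?_, ?_⟩, ⟨?_, ?_, ?_⟩, ⟨hψe, hψb, hψg''⟩, ?_, ?_, ?_⟩
  · simp [hψe, hαe]
  · simp [hψb, hαb]
  · simp [hψg'']
  · simp [hψe, hβe]
  · simp [hψb, hβb', hβb]
  · simp [hψg'']
  · simp [hψf, hfb, hαe, hαu]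
  · simp [hg'', hψf, hαg]
  · simp [hg'', hψf, hβg', hβg, hβb, hψg']

/-- Every singular endomorphism in dimension at least three has a transverse factorization. -/
lemma hasTransverseNilpotentFactorization_of_ker_ne_bot {f : End F V} (hdim : 3 ≤ finrank F V)
    (hker : LinearMap.ker f ≠ ⊥) : HasTransverseNilpotentFactorization f := by
  by_cases h : LinearMap.ker f ≤ LinearMap.range f
  swap
  · exact hasTransverseNilpotentFactorization_of_ker_not_le_range h
  obtain ⟨e, b₂, b₃, p₁, p₂, ψ, he, hψf, ⟨h11, h12, h13⟩, ⟨h21, h22, h23⟩, ⟨h31, h32, h33⟩,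
    ha, hb, hd⟩ := exists_compression_of_ker_le_range hdim hker h
  set a := p₁ (f b₂) with ha'
  set c := p₂ (f b₂) with hc'
  set d := p₂ (f b₃) with hd'
  let x₁ : Dual F (F × F × F) := LinearMap.fst F F (F × F)
  let x₂ : Dual F (F × F × F) := LinearMap.fst F F F ∘ₗ LinearMap.snd F F (F × F)
  let x₃ : Dual F (F × F × F) := LinearMap.snd F F F ∘ₗ LinearMap.snd F F (F × F)
  let f₀ : End F (F × F × F) := (a • x₂).prod ((c • x₂ + d • x₃).prod 0)
  have hf₀ : HasTransverseNilpotentFactorization f₀ :=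
    hasTransverseNilpotentFactorization_three a c d f₀ (fun x y z => by simp [f₀, x₂, x₃])
  let P : V →ₗ[F] F × F × F := p₁.prod (p₂.prod ψ)
  let σ : F × F × F →ₗ[F] V := x₁.smulRight e + x₂.smulRight b₂ + x₃.smulRight b₃
  let t : V →ₗ[F] F × F × F := p₁.prod ((a⁻¹ • (p₁ ∘ₗ f)).prod
    (d⁻¹ • (p₂ ∘ₗ f - (c * a⁻¹) • (p₁ ∘ₗ f))))
  let s : F × F × F →ₗ[F] V := (a⁻¹ • x₁).smulRight (f b₂) +
    (d⁻¹ • (x₂ - (c * a⁻¹) • x₁)).smulRight (f b₃) + x₃.smulRight b₃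
  refine hf₀.extend (finrank F V - 3) (by simp; omega) f (f - s ∘ₗ f₀ ∘ₗ t) P t σ s
    ?_ ?_ ?_ ?_ ?_ ?_
  · rintro ⟨x, y, z⟩
    simp [P, σ, x₁, x₂, x₃, *]
  · rintro ⟨x, y, z⟩
    simp [t, σ, x₁, x₂, x₃, he, h11, h12, h13, hb, ← ha', ← hc', ← hd']
    constructor <;> field_simp
    ring
  · rintro ⟨x, y, z⟩
    simp [P, s, x₁, x₂, x₃, hψf, h13, h23, h33, hb, ← ha', ← hc', ← hd']
    constructor <;> field_simp
    ring
  · intro v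
    simp [P, s, t, f₀, x₁, x₂, x₃, hψf, hb, ← ha', ← hc', ← hd']
    constructor <;> field_simp <;> ring
  · rintro ⟨x, y, z⟩
    simp [s, t, f₀, σ, x₁, x₂, x₃, he, hb, ← ha', ← hc', ← hd']
    field_simp
    simp [hd]
  · intro v
    simp

end Singular

/-- For `A₀` a nilpotent `m × m` matrix with `m ≥ 3` and `A₁` an invertible `k × k`
matrix, the block diagonal matrix `Dg[A₀, A₁]` is a product of two nilpotent
`(m + k) × (m + k)` matrices. -/
theorem nilpotent_invertible_block_product_of_nilpotents
    (F : Type*) [Field F] (m k : ℕ) (hm : 3 ≤ m)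
    (A₀ : Matrix (Fin m) (Fin m) F) (hA₀ : IsNilpotent A₀)
    (A₁ : Matrix (Fin k) (Fin k) F) (hA₁ : IsUnit A₁) :
    ∃ N₁ N₂ : Matrix (Fin (m + k)) (Fin (m + k)) F,
      IsNilpotent N₁ ∧ IsNilpotent N₂ ∧
      Matrix.reindex finSumFinEquiv finSumFinEquiv
          (Matrix.fromBlocks A₀ 0 0 A₁) = N₁ * N₂ := by
  set M := Matrix.reindex finSumFinEquiv finSumFinEquiv (Matrix.fromBlocks A₀ 0 0 A₁) with hM
  have hdet₀ : A₀.det = 0 := by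
    have : Nonempty (Fin m) := ⟨⟨0, by omega⟩⟩
    obtain ⟨r, hr⟩ := hA₀
    refine eq_zero_of_pow_eq_zero (n := r) ?_
    rw [← Matrix.det_pow, hr, Matrix.det_zero]
  have hdet : M.det = 0 := by
    rw [hM, Matrix.det_reindex_self, Matrix.det_fromBlocks_zero₂₁, hdet₀, zero_mul]
  have hker : LinearMap.ker (Matrix.toLin' M) ≠ ⊥ := by
    obtain ⟨v, hv, hMv⟩ := Matrix.exists_mulVec_eq_zero_iff.2 hdet
    exact (Submodule.ne_bot_iff _).2 ⟨v, by simpa using hMv, hv⟩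
  obtain ⟨N₁, N₂, -, -, h₁, h₂, hN, -⟩ :=
    hasTransverseNilpotentFactorization_of_ker_ne_bot (by simp; omega) hker
  have hprod : Matrix.toLin' M = N₁ * N₂ := LinearMap.ext hN
  refine ⟨LinearMap.toMatrixAlgEquiv' N₁, LinearMap.toMatrixAlgEquiv' N₂,
    h₁.map LinearMap.toMatrixAlgEquiv', h₂.map LinearMap.toMatrixAlgEquiv', ?_⟩
  rw [← map_mul, ← hprod]
  exact (LinearMap.toMatrix'_toLin' M).symm
end
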